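/- arXiv:1004.5239 — 3 statements merged into one kernel-verified Lean document; each statement's English description precedes it below -/
import Mathlib

section
/- Let w be a word in the alphabet {X,A} beginning with the letter X. If P_w(x^2,y^2) has a factor f in Z[x,y] that is irreducible as an element of C[x,y], then w is not universal; that is, there exist a uniquely divisible group G and elements a, b in G such that the equation w(x,a) = b has no solution x in G. -/
open MvPolynomial

/-- A group is *uniquely divisible* if every element has a unique `m`-th root
for each positive integer `m`. -/
def UniquelyDivisible (G : Type*) [Group G] : Prop :=
  ∀ (b : G) (m : ℕ), 0 < m → ∃! x : G, x ^ m = b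

/-- Evaluation of a word in the alphabet `{X, A}` (encoded as a `List Bool`,
with `true` standing for the letter `X` and `false` for the letter `A`)
at elements `x` (for `X`) and `a` (for `A`) of a monoid. -/
def wordEval {M : Type*} [Monoid M] (w : List Bool) (x a : M) : M :=
  (w.map fun c => if c then x else a).prod

/-- The word polynomial `P_w ∈ ℤ[x,y]`: for
`w = A^{a_0} X A^{a_1} X ⋯ A^{a_{n-1}} X A^{a_n}` it is
`∑_{k=0}^{n-1} x^k y^{a_0 + ⋯ + a_k}`, where `x = X 0`, `y = X 1`. -/
noncomputable def wordPoly : List Bool → MvPolynomial (Fin 2) ℤ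
  | [] => 0
  | true :: w => X 0 * wordPoly w + 1
  | false :: w => X 1 * wordPoly w

/-!
Let a group `H` act on the additive group of a field `L` by scalars. In `L ⋊ H` the translation
part of `w(g, a)`, for `g = (t, x)` and `a = (0, y)`, is `P_w(x, y) t`. If `H` is commutative and
uniquely divisible, the linear part `x` of `g` is determined by that of `w(g, a)`; so a zero
`(x, y)` of `P_w` with `x, y ∈ H` makes `w(g, a) = (1, w(x, y))` unsolvable for `g`.

Such a zero is `(ξ ^ N, η ^ N)`, where `(ξ, η)` is a generic zero of the factor `F` of
`P_w(x ^ N, y ^ N)` over the algebraically closed field `E`. A root of unity among the monomials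
`ξ ^ i η ^ j` is a constant `c ∈ E`. Writing it as a quotient of polynomials `p / q` over the field
`K` of definition of `F` gives `F ∣ p - c q`; if `c ∉ K`, a `K`-linear functional on `E` that kills
`1` but not `c` turns this into `F ∣ q`, which is absurd. Hence `c ∈ K` is killed by the `N`-th
power. The `N`-th powers of monomials thus form a torsion-free group, whose divisible hull embeds in
`Lˣ` because `Lˣ` is divisible: this hull is `H`.
-/

universe u v

/-- Universality of a word: `w(x, a) = b` is solvable for `x` in every uniquely divisible group.
Only groups in one universe `u` are tested. -/
def IsUniversal (w : List Bool) : Prop :=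
  ∀ (G : Type u) [Group G], UniquelyDivisible G → ∀ a b : G, ∃ x : G, wordEval w x a = b

theorem not_isUniversal_iff {w : List Bool} :
    ¬ IsUniversal.{u} w ↔ ∃ (G : Type u) (_ : Group G), UniquelyDivisible G ∧
      ∃ a b : G, ¬ ∃ x : G, wordEval w x a = b := by
  simp only [IsUniversal, not_forall, exists_prop]

section Words

theorem wordEval_cons {M : Type*} [Monoid M] (c : Bool) (w : List Bool) (x a : M) :
    wordEval (c :: w) x a = (if c then x else a) * wordEval w x a := by
  simp only [wordEval, List.map_cons, List.prod_cons]

theorem map_wordEval {M N : Type*} [Monoid M] [Monoid N] (φ : M →* N) (w : List Bool) (x a : M) :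
    φ (wordEval w x a) = wordEval w (φ x) (φ a) := by
  simp only [wordEval, map_list_prod, List.map_map]
  congr 2
  funext c
  exact apply_ite φ (c = true) x a

theorem wordEval_eq_pow_mul_pow {M : Type*} [CommMonoid M] (w : List Bool) (x a : M) :
    wordEval w x a = x ^ w.count true * a ^ w.count false := by
  induction w with
  | nil => simp [wordEval]
  | cons c w ih =>
    rw [wordEval_cons, ih]
    cases c
    · simp [pow_succ', mul_left_comm]
    · simp [pow_succ', mul_assoc]

theorem wordPoly_eq_zero_of_notMem {w : List Bool} (hw : true ∉ w) : wordPoly w = 0 := by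
  induction w with
  | nil => rfl
  | cons c w ih =>
    cases c
    · rw [wordPoly, ih (mt (List.mem_cons_of_mem _) hw), mul_zero]
    · exact absurd List.mem_cons_self hw

theorem constantCoeff_aeval_wordPoly {σ R : Type*} [CommRing R] {w : List Bool}
    (hw : w.head? = some true) {v : Fin 2 → MvPolynomial σ R} (hv : constantCoeff (v 0) = 0) :
    constantCoeff (aeval v (wordPoly w)) = 1 := by
  obtain ⟨w, rfl⟩ := List.head?_eq_some_iff.mp hw
  simp [wordPoly, hv]

end Words

section UniquelyDivisible

theorem UniquelyDivisible.pow_left_injective {G : Type*} [Group G] (hG : UniquelyDivisible G)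
    {m : ℕ} (hm : 0 < m) : Function.Injective fun x : G ↦ x ^ m :=
  fun _ y hxy ↦ (hG (y ^ m) m hm).unique hxy rfl

theorem uniquelyDivisible_multiplicative (V : Type*) [AddCommGroup V] [Module ℚ V] :
    UniquelyDivisible (Multiplicative V) := by
  intro b m hm
  have hm' : (m : ℚ) ≠ 0 := Nat.cast_ne_zero.mpr hm.ne'
  have key (x : Multiplicative V) : x ^ m = b ↔ x = .ofAdd ((m : ℚ)⁻¹ • b.toAdd) := by
    rw [← Multiplicative.toAdd.apply_eq_iff_eq, toAdd_pow, ← Multiplicative.toAdd.apply_eq_iff_eq,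
      toAdd_ofAdd, eq_inv_smul_iff₀ hm', Nat.cast_smul_eq_nsmul]
  simp only [key, existsUnique_eq]

end UniquelyDivisible

section AffineGroup

theorem geom_sum_ne_zero_of_pow_eq_one_imp {K : Type*} [Field K] [CharZero K] {u : K} {m : ℕ}
    (hm : 0 < m) (hu : u ^ m = 1 → u = 1) : ∑ i ∈ Finset.range m, u ^ i ≠ 0 := by
  intro h
  have hu1 : u = 1 := hu <| by rw [← sub_eq_zero, ← geom_sum_mul, h, zero_mul]
  simp [hu1, hm.ne'] at h

variable {L : Type*} [Field L] {H : Type*} (V : Type*) [AddCommGroup V] [Module L V]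

/-- The action of `H` on the additive group of `V` by scalar multiplication through the character
`χ`; the additive group is written multiplicatively, as `SemidirectProduct` requires. -/
def scalarAction [Group H] (χ : H →* Lˣ) : H →* MulAut (Multiplicative V) where
  toFun h := AddEquiv.toMultiplicative (DistribMulAction.toAddEquiv V (χ h))
  map_one' := by ext; simp
  map_mul' h k := by ext; simp [mul_smul]

/-- The group of affine maps `t ↦ χ h • t + v` of `V`, with `v : V` and `h : H`. -/
abbrev AffineGroup [Group H] (χ : H →* Lˣ) : Type _ := Multiplicative V ⋊[scalarAction V χ] H

namespace AffineGroup

variable {V}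

section Group

variable [Group H] {χ : H →* Lˣ}

theorem toAdd_left_mul (g k : AffineGroup V χ) :
    (g * k).left.toAdd = g.left.toAdd + (χ g.right : L) • k.left.toAdd := rfl

theorem right_pow (g : AffineGroup V χ) (m : ℕ) : (g ^ m).right = g.right ^ m :=
  map_pow SemidirectProduct.rightHom g m

theorem toAdd_left_pow (g : AffineGroup V χ) (m : ℕ) :
    (g ^ m).left.toAdd = (∑ i ∈ Finset.range m, (χ g.right : L) ^ i) • g.left.toAdd := by
  induction m with
  | zero => simp
  | succ m ih =>
    rw [pow_succ, toAdd_left_mul, ih, right_pow, Finset.sum_range_succ, add_smul, map_pow,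
      Units.val_pow_eq_pow_val]

theorem toAdd_left_wordEval (w : List Bool) (g k : AffineGroup V χ) (hk : k.left = 1) :
    (wordEval w g k).left.toAdd =
      aeval ![(χ g.right : L), (χ k.right : L)] (wordPoly w) • g.left.toAdd := by
  induction w with
  | nil => simp [wordEval, wordPoly]
  | cons c w ih =>
    rw [wordEval_cons, toAdd_left_mul, ih]
    cases c
    · simp [wordPoly, hk, mul_smul]
    · simp [wordPoly, add_smul, mul_smul, add_comm]

theorem right_wordEval (w : List Bool) (g k : AffineGroup V χ) :
    (wordEval w g k).right = wordEval w g.right k.right :=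
  map_wordEval SemidirectProduct.rightHom w g k

end Group

theorem uniquelyDivisible [CharZero L] [Group H] {χ : H →* Lˣ} (hχ : Function.Injective χ)
    (hH : UniquelyDivisible H) : UniquelyDivisible (AffineGroup V χ) := by
  intro b m hm
  obtain ⟨h, hh, huniq⟩ := hH b.right m hm
  set s : L := ∑ i ∈ Finset.range m, (χ h : L) ^ i
  have hs : s ≠ 0 := by
    refine geom_sum_ne_zero_of_pow_eq_one_imp hm fun hu ↦ ?_
    have hpow : h ^ m = 1 ^ m := hχ (Units.ext (by simpa using hu))
    simp [hH.pow_left_injective hm hpow]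
  have hpow_left (x : AffineGroup V χ) (hx : x.right = h) :
      (x ^ m).left.toAdd = s • x.left.toAdd := by rw [toAdd_left_pow, hx]
  refine ⟨⟨.ofAdd (s⁻¹ • b.left.toAdd), h⟩, ?_, fun x hx ↦ ?_⟩
  · refine SemidirectProduct.ext (Multiplicative.toAdd.injective ?_) ?_
    · rw [hpow_left _ rfl, toAdd_ofAdd, smul_inv_smul₀ hs]
    · rw [right_pow, hh]
  · have hxr : x.right = h := huniq _ (hx ▸ right_pow x m).symm
    refine SemidirectProduct.ext (Multiplicative.toAdd.injective ?_) hxr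
    rw [toAdd_ofAdd, eq_inv_smul_iff₀ hs, ← hpow_left x hxr, hx]

end AffineGroup

theorem not_isUniversal_of_uniquelyDivisible {L H : Type u} [Field L] [CharZero L] [CommGroup H]
    (hH : UniquelyDivisible H) {χ : H →* Lˣ} (hχ : Function.Injective χ) {w : List Bool} {x y : H}
    (hxy : aeval ![(χ x : L), (χ y : L)] (wordPoly w) = 0) : ¬ IsUniversal.{u} w := by
  intro hw
  obtain ⟨g, hg⟩ := hw (AffineGroup L χ) (AffineGroup.uniquelyDivisible hχ hH) ⟨1, y⟩
    ⟨.ofAdd 1, wordEval w x y⟩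
  have hright : wordEval w g.right y = wordEval w x y := by
    simpa only [AffineGroup.right_wordEval] using congrArg (·.right) hg
  have hroot : aeval ![(χ g.right : L), (χ y : L)] (wordPoly w) = 0 := by
    by_cases hX : true ∈ w
    · rw [wordEval_eq_pow_mul_pow, wordEval_eq_pow_mul_pow, mul_left_inj] at hright
      rwa [hH.pow_left_injective (List.count_pos_iff.mpr hX) hright]
    · rw [wordPoly_eq_zero_of_notMem hX, map_zero]
  have hleft := AffineGroup.toAdd_left_wordEval w g ⟨1, y⟩ rfl
  rw [hg, hroot, zero_smul] at hleft
  exact one_ne_zero hleft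

end AffineGroup

section DivisibleHull

theorem exists_injective_extension_divisibleHull {T A : Type*} [AddCommGroup T] [IsAddTorsionFree T]
    [AddCommGroup A] [DivisibleBy A ℤ] {i : T →+ A} (hi : Function.Injective i) :
    ∃ g : DivisibleHull T →+ A, Function.Injective g ∧ ∀ t : T, g t = i t := by
  obtain ⟨g, hg⟩ := (Module.Baer.of_divisible A).extension_property_addMonoidHom
    (DivisibleHull.coeAddMonoidHom T) DivisibleHull.coe_injective i
  have hgi (t : T) : g t = i t := DFunLike.congr_fun hg t
  refine ⟨g, (injective_iff_map_eq_zero g).mpr fun v hv ↦ ?_, hgi⟩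
  induction v with | mk t n
  have htn : (t : DivisibleHull T) = (n : ℕ) • .mk t n := by
    rw [DivisibleHull.nsmul_mk, DivisibleHull.mk_eq_mk_iff_smul_eq_smul, PNat.one_coe, one_smul]
  have ht : i t = 0 := by rw [← hgi, htn, map_nsmul, hv, smul_zero]
  rw [(injective_iff_map_eq_zero i).mp hi t ht, DivisibleHull.mk_zero]

theorem exists_uniquelyDivisible_le_range {A : Type u} [CommGroup A] [RootableBy A ℕ]
    (T : Subgroup A) [IsMulTorsionFree T] :
    ∃ (D : Type u) (_ : CommGroup D) (χ : D →* A),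
      Function.Injective χ ∧ UniquelyDivisible D ∧ T ≤ χ.range := by
  let : DivisibleBy (Additive A) ℕ :=
    ⟨fun a n ↦ .ofMul (RootableBy.root a.toMul n), fun a ↦ RootableBy.root_zero a.toMul,
      fun a hn ↦ RootableBy.root_cancel a.toMul hn⟩
  let := AddGroup.divisibleByIntOfDivisibleByNat (Additive A)
  obtain ⟨g, hg, hgT⟩ := exists_injective_extension_divisibleHull (i := T.subtype.toAdditive)
    T.subtype_injective
  exact ⟨Multiplicative (DivisibleHull (Additive T)), inferInstance,
    AddMonoidHom.toMultiplicativeLeft g, hg, uniquelyDivisible_multiplicative _,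
    fun t ht ↦ ⟨.ofAdd (DivisibleHull.coe (.ofMul ⟨t, ht⟩)), hgT _⟩⟩

noncomputable instance rootableByUnits {L : Type*} [Field L] [IsAlgClosed L] : RootableBy Lˣ ℕ :=
  rootableByOfPowLeftSurj _ _ fun {m} hm z ↦ by
    obtain ⟨r, hr⟩ := IsAlgClosed.exists_pow_nat_eq (z : L) (Nat.pos_of_ne_zero hm)
    have hr0 : r ≠ 0 := by
      rintro rfl
      exact z.ne_zero (by rw [← hr, zero_pow hm])
    exact ⟨Units.mk0 r hr0, Units.ext (by simpa using hr)⟩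

theorem not_isUniversal_of_isMulTorsionFree {L : Type u} [Field L] [CharZero L] [IsAlgClosed L]
    (T : Subgroup Lˣ) [IsMulTorsionFree T] {w : List Bool} {x y : Lˣ} (hx : x ∈ T) (hy : y ∈ T)
    (hxy : aeval ![(x : L), (y : L)] (wordPoly w) = 0) : ¬ IsUniversal.{u} w := by
  obtain ⟨D, _, χ, hχ, hD, hT⟩ := exists_uniquelyDivisible_le_range T
  obtain ⟨x, rfl⟩ := hT hx
  obtain ⟨y, rfl⟩ := hT hy
  exact not_isUniversal_of_uniquelyDivisible hD hχ hxy

theorem isMulTorsionFree_map_powMonoidHom {A : Type*} [CommGroup A] {S : Subgroup A} {N : ℕ}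
    (hS : ∀ z ∈ S, IsOfFinOrder z → z ^ N = 1) : IsMulTorsionFree (S.map (powMonoidHom N)) := by
  refine .of_not_isOfFinOrder ?_
  rintro ⟨_, z, hz, rfl⟩ hne hfin
  refine hne (Subtype.ext ?_)
  have hfin' : IsOfFinOrder (z ^ N) := Submonoid.isOfFinOrder_coe.mpr hfin
  rcases N.eq_zero_or_pos with rfl | hN
  · exact pow_zero z
  · exact hS z hz (hfin'.of_pow hN.ne')

end DivisibleHull

section Descent

variable {K E σ : Type*} [Field K] [Field E] [Algebra K E]

theorem dvd_linearMap_of_map_dvd_sub_C_mul (ℓ : E →ₗ[K] K) {f p q : MvPolynomial σ K} {c : E}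
    (h : map (algebraMap K E) f ∣ map (algebraMap K E) p - C c * map (algebraMap K E) q) :
    f ∣ C (ℓ 1) * p - C (ℓ c) * q := by
  obtain ⟨g, hg⟩ := h
  refine ⟨AddMonoidAlgebra.map ℓ.toAddMonoidHom g, ?_⟩
  ext m
  have hcoeff := congrArg (ℓ <| coeff m ·) hg
  have hmul (a : K) (e : E) : ℓ (algebraMap K E a * e) = a * ℓ e := by
    rw [← Algebra.smul_def, map_smul, smul_eq_mul]
  have hsmul (a : K) : ℓ (algebraMap K E a) = ℓ 1 * a := by simpa [mul_comm] using hmul a 1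
  simp only [coeff_sub, coeff_C_mul, coeff_map, map_sub, mul_comm c, hmul, hsmul] at hcoeff
  rw [coeff_sub, coeff_C_mul, coeff_C_mul, mul_comm (ℓ c), hcoeff]
  classical
  simp [coeff_mul, coeff_map, hmul]

theorem mem_range_algebraMap_of_map_dvd_sub_C_mul {f p q : MvPolynomial σ K} {c : E}
    (hq : ¬ f ∣ q)
    (h : map (algebraMap K E) f ∣ map (algebraMap K E) p - C c * map (algebraMap K E) q) :
    c ∈ Set.range (algebraMap K E) := by
  by_contra hc
  obtain ⟨ℓ, hℓc, hℓ⟩ := Submodule.exists_le_ker_of_notMem (p := (1 : Submodule K E)) (v := c)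
    (by simpa [Submodule.mem_one] using hc)
  have hℓ1 : ℓ 1 = 0 := hℓ (Submodule.one_le.mp le_rfl)
  have hdvd := dvd_linearMap_of_map_dvd_sub_C_mul ℓ h
  rw [hℓ1, C_0, zero_mul, zero_sub, dvd_neg] at hdvd
  have hu : IsUnit (C (ℓ c) : MvPolynomial σ K) := (IsUnit.mk0 _ hℓc).map C
  exact hq (hu.dvd_mul_left.mp hdvd)

end Descent

section GenericZero

/-- `v` is a generic zero, in the sense of van der Waerden, of the hypersurface `F = 0` over `E`:
the polynomial relations satisfied by the coordinates of `v` are the multiples of `F`. -/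
def IsGenericZero {σ E L : Type*} [CommRing E] [CommRing L] [Algebra E L] (F : MvPolynomial σ E)
    (v : σ → L) : Prop :=
  ∀ p, aeval v p = 0 ↔ F ∣ p

theorem exists_isGenericZero {σ : Type v} {E : Type u} [Field E] {F : MvPolynomial σ E}
    (hF : Prime F) :
    ∃ (L : Type (max u v)) (_ : Field L) (_ : Algebra E L) (_ : IsAlgClosed L) (v : σ → L),
      IsGenericZero F v := by
  let I : Ideal (MvPolynomial σ E) := Ideal.span {F}
  have : I.IsPrime := (Ideal.span_singleton_prime hF.ne_zero).mpr hF
  let L := AlgebraicClosure I.ResidueField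
  let φ : MvPolynomial σ E →ₐ[E] L :=
    (IsScalarTower.toAlgHom E I.ResidueField L).comp
      (IsScalarTower.toAlgHom E (MvPolynomial σ E) I.ResidueField)
  refine ⟨L, inferInstance, inferInstance, inferInstance, fun i ↦ φ (X i), fun p ↦ ?_⟩
  have hφ : aeval (fun i ↦ φ (X i)) = φ := (aeval_unique φ).symm
  rw [hφ, ← Ideal.mem_span_singleton, ← Ideal.algebraMap_residueField_eq_zero (I := I)]
  exact map_eq_zero (algebraMap I.ResidueField L)

variable {K E L σ : Type*} [Field K] [Field E] [Field L] [Algebra K E] [Algebra E L] [Algebra K L]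
  [IsScalarTower K E L] {f : MvPolynomial σ K}

theorem IsGenericZero.mem_range_algebraMap {v : σ → L}
    (hv : IsGenericZero (map (algebraMap K E) f) v) {c : E}
    (hc : algebraMap E L c ∈ IntermediateField.adjoin K (Set.range v)) :
    c ∈ Set.range (algebraMap K E) := by
  obtain ⟨p, q, hpq⟩ := (IntermediateField.mem_adjoin_range_iff K v _).mp hc
  by_cases hq : aeval v q = 0
  · rw [hq, div_zero, map_eq_zero] at hpq
    exact ⟨0, by rw [hpq, map_zero]⟩
  have hrel : aeval v (map (algebraMap K E) p - C c * map (algebraMap K E) q) = 0 := by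
    rw [map_sub, map_mul, aeval_C, aeval_map_algebraMap, aeval_map_algebraMap, hpq,
      div_mul_cancel₀ _ hq, sub_self]
  refine mem_range_algebraMap_of_map_dvd_sub_C_mul (fun hfq ↦ hq ?_) ((hv _).mp hrel)
  rw [← aeval_map_algebraMap E, hv]
  exact map_dvd (map (algebraMap K E)) hfq

theorem mem_range_algebraMap_of_isOfFinOrder [IsAlgClosed E] {z : L} (hz : IsOfFinOrder z) :
    z ∈ Set.range (algebraMap E L) := by
  obtain ⟨n, hn, hzn⟩ := isOfFinOrder_iff_pow_eq_one.mp hz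
  have hint : IsIntegral E z := .of_pow hn (hzn ▸ isIntegral_one)
  exact minpoly.mem_range_of_degree_eq_one E z
    (IsAlgClosed.degree_eq_one_of_irreducible E (minpoly.irreducible hint))

theorem coe_mem_adjoin_of_mem_closure {u : σ → Lˣ} {z : Lˣ}
    (hz : z ∈ Subgroup.closure (Set.range u)) :
    (z : L) ∈ IntermediateField.adjoin K (Set.range fun i ↦ (u i : L)) := by
  induction hz using Subgroup.closure_induction with
  | mem z hz =>
    obtain ⟨i, rfl⟩ := hz
    exact IntermediateField.subset_adjoin K _ ⟨i, rfl⟩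
  | one => exact one_mem _
  | mul z z' _ _ h h' => exact mul_mem h h'
  | inv z _ h => exact Units.val_inv_eq_inv_val z ▸ inv_mem h

theorem IsGenericZero.pow_eq_one_of_isOfFinOrder [IsAlgClosed E] {u : σ → Lˣ}
    (hu : IsGenericZero (map (algebraMap K E) f) fun i ↦ (u i : L)) {N : ℕ}
    (hN : ∀ c : K, IsOfFinOrder c → c ^ N = 1) {z : Lˣ}
    (hz : z ∈ Subgroup.closure (Set.range u)) (hfin : IsOfFinOrder z) : z ^ N = 1 := by
  have hfinL : IsOfFinOrder (z : L) := (Units.coeHom L).isOfFinOrder hfin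
  obtain ⟨c, hc⟩ := mem_range_algebraMap_of_isOfFinOrder (E := E) hfinL
  obtain ⟨k, rfl⟩ := hu.mem_range_algebraMap (hc ▸ coe_mem_adjoin_of_mem_closure hz)
  rw [← IsScalarTower.algebraMap_apply] at hc
  have hinj : Function.Injective (algebraMap K L : K →* L) := (algebraMap K L).injective
  have hk : IsOfFinOrder k := hinj.isOfFinOrder_iff.mp (hc ▸ hfinL)
  refine Units.ext ?_
  rw [Units.val_pow_eq_pow_val, ← hc, ← map_pow, hN k hk, map_one, Units.val_one]

end GenericZero

theorem map_aeval_pair {R S F : Type*} [CommRing R] [CommRing S] [Algebra ℤ R] [Algebra ℤ S]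
    [FunLike F R S] [RingHomClass F R S] (ψ : F) (x y : R) (p : MvPolynomial (Fin 2) ℤ) :
    ψ (aeval ![x, y] p) = aeval ![ψ x, ψ y] p := by
  have hpair : (fun i ↦ ψ (![x, y] i)) = ![ψ x, ψ y] := funext (Fin.forall_fin_two.mpr ⟨rfl, rfl⟩)
  have hℤ : (ψ : R →+* S).comp (algebraMap ℤ R) = algebraMap ℤ S := RingHom.ext_int _ _
  rw [← hpair, aeval_def (fun i ↦ ψ (![x, y] i)), ← hℤ]
  exact map_aeval ![x, y] (ψ : R →+* S) p

theorem not_map_dvd_X_of_head?_eq_some_true {R E : Type*} [CommRing R] [Field E] (φ : R →+* E)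
    {N : ℕ} (hN : N ≠ 0) {w : List Bool} (hw : w.head? = some true) {f : MvPolynomial (Fin 2) R}
    (hdvd : f ∣ aeval ![(X 0 : MvPolynomial (Fin 2) R) ^ N, X 1 ^ N] (wordPoly w))
    (hirr : Irreducible (map φ f)) (i : Fin 2) : ¬ map φ f ∣ X i := by
  intro hi
  have hXf : X i ∣ map φ f := hirr.dvd_symm (X_prime (R := E)).irreducible hi
  have hXw := map_dvd constantCoeff (hXf.trans (map_dvd (map φ) hdvd))
  rw [constantCoeff_X, zero_dvd_iff, constantCoeff_map,
    constantCoeff_aeval_wordPoly hw (by simp [hN]), map_one] at hXw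
  exact one_ne_zero hXw

theorem sq_eq_one_of_isOfFinOrder {R : Type*} [Ring R] [LinearOrder R]
    [IsStrictOrderedRing R] {c : R} (hc : IsOfFinOrder c) : c ^ 2 = 1 := by
  obtain ⟨n, hn, hcn⟩ := isOfFinOrder_iff_pow_eq_one.mp hc
  rcases pow_eq_one_iff_cases.mp hcn with rfl | rfl | ⟨rfl, -⟩
  · exact absurd hn (lt_irrefl 0)
  · exact one_pow 2
  · exact neg_one_sq

theorem stmt3_general {R K : Type*} {E : Type u} [CommRing R] [Field K] [CharZero K] [Field E]
    [IsAlgClosed E] [Algebra R K] [Algebra K E] [Algebra R E] [IsScalarTower R K E] {N : ℕ}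
    (hN : ∀ c : K, IsOfFinOrder c → c ^ N = 1) (w : List Bool) (f : MvPolynomial (Fin 2) R)
    (hX : ∀ i, ¬ map (algebraMap R E) f ∣ X i)
    (hdvd : f ∣ aeval ![(X 0 : MvPolynomial (Fin 2) R) ^ N, X 1 ^ N] (wordPoly w))
    (hirr : Irreducible (map (algebraMap R E) f)) : ¬ IsUniversal.{u} w := by
  obtain ⟨L, _, _, _, v, hv⟩ := exists_isGenericZero hirr.prime
  let : Algebra K L := ((algebraMap E L).comp (algebraMap K E)).toAlgebra
  have : IsScalarTower K E L := .of_algebraMap_eq' rfl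
  have : CharZero L := charZero_of_injective_algebraMap (algebraMap K L).injective
  have hv0 (i : Fin 2) : v i ≠ 0 := fun h ↦ hX i ((hv _).mp (by rwa [aeval_X]))
  let u (i : Fin 2) : Lˣ := Units.mk0 (v i) (hv0 i)
  have hu : IsGenericZero (map (algebraMap K E) (map (algebraMap R K) f)) fun i ↦ (u i : L) := by
    rwa [map_map, ← IsScalarTower.algebraMap_eq]
  let T : Subgroup Lˣ := (Subgroup.closure (Set.range u)).map (powMonoidHom N)
  have hT (i : Fin 2) : u i ^ N ∈ T := ⟨u i, Subgroup.subset_closure ⟨i, rfl⟩, rfl⟩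
  have : IsMulTorsionFree T := isMulTorsionFree_map_powMonoidHom fun _ ↦
    hu.pow_eq_one_of_isOfFinOrder hN
  have hroot := (hv _).mpr (map_dvd (map (algebraMap R E)) hdvd)
  rw [map_aeval_pair, map_aeval_pair] at hroot
  exact not_isUniversal_of_isMulTorsionFree T (hT 0) (hT 1) (by simpa [u] using hroot)

theorem stmt3 (w : List Bool) (hw : w.head? = some true)
    (f : MvPolynomial (Fin 2) ℤ)
    (hdvd : f ∣ aeval ![(X 0 : MvPolynomial (Fin 2) ℤ) ^ 2, X 1 ^ 2] (wordPoly w))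
    (hirr : Irreducible (MvPolynomial.map (Int.castRingHom ℂ) f)) :
    ∃ (G : Type) (_ : Group G), UniquelyDivisible G ∧
      ∃ a b : G, ¬ ∃ x : G, wordEval w x a = b := by
  exact not_isUniversal_iff.mp <| stmt3_general (fun _ : ℚ ↦ (sq_eq_one_of_isOfFinOrder ·)) w f
    (not_map_dvd_X_of_head?_eq_some_true _ two_ne_zero hw hdvd hirr) hdvd hirr
end

section
/- Let m >= 0 and n >= 1 be integers, and let w = X A^{m+2n} X A^{m+n} X A^m X. Then P_w(x,y) factors as (1 + x y^{m+n}) * (1 + x(y^{m+2n} - y^{m+n}) + x^2 y^{2m+2n}), and the polynomial 1 + x^2 (y^{2m+4n} - y^{2m+2n}) + x^4 y^{4m+4n}, which is a factor of P_w(x^2,y^2) in Z[x,y], is irreducible in C[x,y]. -/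
open MvPolynomial

/-
The crux is the irreducibility of `1 + x²(y^(2k+d) - y^(2k)) + x⁴y^(4k)` for `k = m + n`, `d = 2n`.
The substitution `x = t y^(-k)`, an automorphism over the field of rational functions in `y`, turns
this polynomial into `t⁴ + (y^d - 1) t² + 1 = t² y^d + Φ₁₂(t)`, where `Φ₁₂ = t⁴ - t² + 1` is the
twelfth cyclotomic polynomial. As `Φ₁₂` is prime to `t`, and squarefree outside characteristics 2
and 3, Eisenstein's criterion at any prime factor of `Φ₁₂` applies to `t² y^d + Φ₁₂(t)` as a
polynomial in `y`. Gauss's lemma then brings irreducibility back to the original polynomial.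
-/

open scoped Polynomial

section IrreducibilityCriteria

variable {R : Type*} [CommRing R]

theorem isPrimitive_of_isUnit_coeff {f : R[X]} {i : ℕ} (h : IsUnit (f.coeff i)) :
    f.IsPrimitive := fun r hr =>
  isUnit_of_dvd_unit ((Polynomial.C_dvd_iff_dvd_coeff r f).1 hr i) h

theorem isPrimitive_of_isPrimitive_comp {f g : R[X]} (h : (f.comp g).IsPrimitive) :
    f.IsPrimitive := by
  rintro r ⟨q, rfl⟩
  exact h r ⟨q.comp g, by rw [Polynomial.mul_comp, Polynomial.C_comp]⟩

variable [IsDomain R]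

theorem irreducible_C_mul_X_pow_add_C {a b p : R} {d : ℕ} (hd : d ≠ 0) (hab : IsRelPrime a b)
    (hp : Prime p) (hpb : p ∣ b) (hpb2 : ¬p ^ 2 ∣ b) :
    Irreducible (Polynomial.C a * Polynomial.X ^ d + Polynomial.C b) := by
  set f := Polynomial.C a * Polynomial.X ^ d + Polynomial.C b with hf
  have hpa : ¬p ∣ a := fun h => hp.not_isUnit (hab h hpb)
  have ha : a ≠ 0 := fun h => hpa (h ▸ dvd_zero p)
  have coeff_f (i : ℕ) : f.coeff i = (if i = d then a else 0) + if i = 0 then b else 0 := by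
    rw [hf, Polynomial.coeff_add, Polynomial.coeff_C_mul_X_pow, Polynomial.coeff_C]
  have coeff_zero : f.coeff 0 = b := by simp [coeff_f, hd.symm]
  have coeff_top : f.coeff d = a := by simp [coeff_f, hd]
  have natDegree_f : f.natDegree = d := by
    rw [hf, Polynomial.natDegree_add_C, Polynomial.natDegree_C_mul_X_pow _ _ ha]
  have degree_f : f.degree = d := by
    rw [Polynomial.degree_eq_iff_natDegree_eq_of_pos (Nat.pos_of_ne_zero hd), natDegree_f]
  refine Polynomial.irreducible_of_eisenstein_criterion
    ((Ideal.span_singleton_prime hp.ne_zero).2 hp) ?leading ?lower ?degree ?constant ?primitive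
  case leading =>
    rwa [Polynomial.leadingCoeff, natDegree_f, coeff_top, Ideal.mem_span_singleton]
  case lower =>
    intro i hi
    have hid : i ≠ d := by rintro rfl; exact (degree_f ▸ hi).false
    rw [coeff_f, if_neg hid, zero_add, Ideal.mem_span_singleton]
    split_ifs
    exacts [hpb, dvd_zero p]
  case degree => exact degree_f ▸ Nat.cast_pos.2 (Nat.pos_of_ne_zero hd)
  case constant => rwa [coeff_zero, Ideal.span_singleton_pow, Ideal.mem_span_singleton]
  case primitive =>
    intro r hr
    rw [Polynomial.C_dvd_iff_dvd_coeff] at hr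
    exact hab (coeff_top ▸ hr d) (coeff_zero ▸ hr 0)

-- Over the fraction field `X ↦ a X` is an automorphism.
theorem irreducible_comp_C_mul_X [IsGCDMonoid R] {f : R[X]} {a : R} (ha : a ≠ 0)
    (hf : Irreducible f) (hprim : (f.comp (Polynomial.C a * Polynomial.X)).IsPrimitive) :
    Irreducible (f.comp (Polynomial.C a * Polynomial.X)) := by
  let K := FractionRing R
  have ha' : algebraMap R K a ≠ 0 := by rwa [Ne, FaithfulSMul.algebraMap_eq_zero_iff]
  let _ := invertibleOfNonzero ha'
  rw [(isPrimitive_of_isPrimitive_comp hprim).irreducible_iff_irreducible_map_fraction_map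
      (K := K),
    ← MulEquiv.irreducible_iff (Polynomial.algEquivCMulXAddC (algebraMap R K a) 0)] at hf
  rw [hprim.irreducible_iff_irreducible_map_fraction_map (K := K), Polynomial.map_comp]
  simpa [Polynomial.comp, Polynomial.aeval_def, Polynomial.eval₂_map] using hf

end IrreducibilityCriteria

section Quartic

theorem cyclotomic_twelve (R : Type*) [CommRing R] :
    Polynomial.cyclotomic 12 R = Polynomial.X ^ 4 - Polynomial.X ^ 2 + 1 := by
  rw [← Polynomial.cyclotomic_expand_eq_cyclotomic Nat.prime_two (by decide : 2 ∣ 6) R,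
    Polynomial.cyclotomic_six]
  simp only [map_add, map_sub, map_pow, map_one, Polynomial.expand_X]
  ring

theorem isRelPrime_X_sq_cyclotomic_twelve (R : Type*) [CommRing R] :
    IsRelPrime (Polynomial.X ^ 2) (Polynomial.cyclotomic 12 R) := by
  refine IsCoprime.isRelPrime ⟨1 - Polynomial.X ^ 2, 1, ?_⟩
  rw [cyclotomic_twelve]
  ring

theorem irreducible_X_sq_mul_X_pow_add_cyclotomic_twelve {K : Type*} [Field K]
    (h6 : (6 : K) ≠ 0) {d : ℕ} (hd : d ≠ 0) :
    Irreducible (Polynomial.C (Polynomial.X ^ 2) * Polynomial.X ^ d +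
      Polynomial.C (Polynomial.cyclotomic 12 K)) := by
  have : NeZero ((12 : ℕ) : K) :=
    ⟨fun h => mul_ne_zero h6 h6 (by push_cast at h; linear_combination 3 * h)⟩
  have natDegree_ne_zero : (Polynomial.cyclotomic 12 K).natDegree ≠ 0 := by
    rw [Polynomial.natDegree_cyclotomic]
    decide
  obtain ⟨p, hp, hpdvd⟩ := Polynomial.exists_irreducible_of_natDegree_ne_zero natDegree_ne_zero
  refine irreducible_C_mul_X_pow_add_C hd (isRelPrime_X_sq_cyclotomic_twelve K) hp.prime hpdvd ?_
  intro hsq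
  exact hp.not_isUnit (Polynomial.squarefree_cyclotomic 12 K p (sq p ▸ hsq))

/-- The quartic `t⁴ + (y^d - 1) t² + 1` at `t = x y^k`, as a polynomial in `x` over `R[y]`. For
`k = m + n` and `d = 2 n` it is the factor of `P_w(x², y²)` whose irreducibility is at stake. -/
noncomputable def scaledQuartic (R : Type*) [CommRing R] (k d : ℕ) : R[X][X] :=
  1 + Polynomial.X ^ 2 * Polynomial.C (Polynomial.X ^ (2 * k + d) - Polynomial.X ^ (2 * k)) +
    Polynomial.X ^ 4 * Polynomial.C (Polynomial.X ^ (4 * k))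

section

variable (R : Type*) [CommRing R] (k d : ℕ)

theorem isPrimitive_scaledQuartic : (scaledQuartic R k d).IsPrimitive :=
  isPrimitive_of_isUnit_coeff (i := 0) (by simp [scaledQuartic])

theorem scaledQuartic_zero_comp :
    (scaledQuartic R 0 d).comp (Polynomial.C (Polynomial.X ^ k) * Polynomial.X) =
      scaledQuartic R k d := by
  simp only [scaledQuartic, Polynomial.add_comp, Polynomial.mul_comp, Polynomial.pow_comp,
    Polynomial.X_comp, Polynomial.C_comp, Polynomial.one_comp, map_sub, Polynomial.sub_comp,
    map_pow]
  ring

theorem scaledQuartic_map {S : Type*} [CommRing S] (f : R →+* S) :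
    (scaledQuartic R k d).map (Polynomial.mapRingHom f) = scaledQuartic S k d := by
  simp [scaledQuartic]

end

theorem irreducible_scaledQuartic_zero_of_field {K : Type*} [Field K] (h6 : (6 : K) ≠ 0) {d : ℕ}
    (hd : d ≠ 0) : Irreducible (scaledQuartic K 0 d) := by
  rw [← MulEquiv.irreducible_iff (Polynomial.Bivariate.swap (R := K))]
  convert irreducible_X_sq_mul_X_pow_add_cyclotomic_twelve h6 hd using 1
  simp only [scaledQuartic, cyclotomic_twelve, map_add, map_mul, map_pow, map_sub, map_one,
    Polynomial.Bivariate.swap_X, Polynomial.Bivariate.swap_Y]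
  ring

theorem irreducible_scaledQuartic_of_field {K : Type*} [Field K] (h6 : (6 : K) ≠ 0) (k : ℕ)
    {d : ℕ} (hd : d ≠ 0) : Irreducible (scaledQuartic K k d) := by
  have hprim := isPrimitive_scaledQuartic K k d
  rw [← scaledQuartic_zero_comp] at hprim ⊢
  exact irreducible_comp_C_mul_X (pow_ne_zero k Polynomial.X_ne_zero)
    (irreducible_scaledQuartic_zero_of_field h6 hd) hprim

variable {R : Type*} [CommRing R] [IsDomain R]

theorem irreducible_scaledQuartic (h6 : (6 : R) ≠ 0) (k : ℕ) {d : ℕ} (hd : d ≠ 0) :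
    Irreducible (scaledQuartic R k d) := by
  let K := FractionRing R
  have h6' : (6 : K) ≠ 0 := by
    rwa [← map_ofNat (algebraMap R K) 6, Ne, FaithfulSMul.algebraMap_eq_zero_iff]
  have map_injective : Function.Injective (Polynomial.mapRingHom (algebraMap R K)) :=
    Polynomial.map_injective _ (IsFractionRing.injective R K)
  refine (isPrimitive_scaledQuartic R k d).irreducible_of_irreducible_map_of_injective
    map_injective ?_
  rw [scaledQuartic_map]
  exact irreducible_scaledQuartic_of_field h6' k hd

theorem irreducible_mvPolynomial_quartic (h6 : (6 : R) ≠ 0) (k : ℕ) {d : ℕ} (hd : d ≠ 0) :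
    Irreducible (1 + X 0 ^ 2 * (X 1 ^ (2 * k + d) - X 1 ^ (2 * k)) + X 0 ^ 4 * X 1 ^ (4 * k) :
      MvPolynomial (Fin 2) R) := by
  -- `equivMvPolynomial` makes `X 1` the main variable, whereas `scaledQuartic` is in `x = X 0`.
  rw [← MulEquiv.irreducible_iff (Polynomial.Bivariate.equivMvPolynomial R).symm,
    ← MulEquiv.irreducible_iff (Polynomial.Bivariate.swap (R := R))]
  convert irreducible_scaledQuartic h6 k hd using 1
  simp only [scaledQuartic, map_add, map_mul, map_pow, map_sub, map_one,
    Polynomial.Bivariate.equivMvPolynomial_symm_X_0,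
    Polynomial.Bivariate.equivMvPolynomial_symm_X_1, Polynomial.Bivariate.swap_X,
    Polynomial.Bivariate.swap_Y]

end Quartic

section WordPoly

theorem wordPoly_replicate_false_append (k : ℕ) (w : List Bool) :
    wordPoly (List.replicate k false ++ w) = X 1 ^ k * wordPoly w := by
  induction k with
  | zero => simp
  | succ k ih =>
    rw [List.replicate_succ, List.cons_append, wordPoly, ih]
    ring

theorem wordPoly_factorization (m n : ℕ) :
    wordPoly (true :: (List.replicate (m + 2 * n) false ++
        true :: (List.replicate (m + n) false ++
          true :: (List.replicate m false ++ [true])))) =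
      (1 + X 0 * X 1 ^ (m + n)) *
        (1 + X 0 * (X 1 ^ (m + 2 * n) - X 1 ^ (m + n)) + X 0 ^ 2 * X 1 ^ (2 * m + 2 * n)) := by
  simp only [wordPoly, wordPoly_replicate_false_append]
  ring

theorem dvd_aeval_sq_wordPoly (m n : ℕ) :
    (1 + X 0 ^ 2 * (X 1 ^ (2 * m + 4 * n) - X 1 ^ (2 * m + 2 * n)) +
        X 0 ^ 4 * X 1 ^ (4 * m + 4 * n) : MvPolynomial (Fin 2) ℤ) ∣
      aeval ![(X 0 : MvPolynomial (Fin 2) ℤ) ^ 2, X 1 ^ 2]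
        (wordPoly (true :: (List.replicate (m + 2 * n) false ++
          true :: (List.replicate (m + n) false ++
            true :: (List.replicate m false ++ [true]))))) := by
  rw [wordPoly_factorization, map_mul]
  refine Dvd.dvd.mul_left (dvd_of_eq ?_) _
  simp only [map_add, map_mul, map_pow, map_sub, map_one, aeval_X, Matrix.cons_val_zero,
    Matrix.cons_val_one]
  ring

end WordPoly

theorem stmt5_general {R : Type*} [CommRing R] [IsDomain R] (h6 : (6 : R) ≠ 0) (m n : ℕ)
    (hn : 1 ≤ n) :
    wordPoly (true :: (List.replicate (m + 2 * n) false ++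
        true :: (List.replicate (m + n) false ++
          true :: (List.replicate m false ++ [true])))) =
      (1 + X 0 * X 1 ^ (m + n)) *
        (1 + X 0 * (X 1 ^ (m + 2 * n) - X 1 ^ (m + n)) + X 0 ^ 2 * X 1 ^ (2 * m + 2 * n)) ∧
    (1 + X 0 ^ 2 * (X 1 ^ (2 * m + 4 * n) - X 1 ^ (2 * m + 2 * n)) +
        X 0 ^ 4 * X 1 ^ (4 * m + 4 * n) : MvPolynomial (Fin 2) ℤ) ∣
      aeval ![(X 0 : MvPolynomial (Fin 2) ℤ) ^ 2, X 1 ^ 2]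
        (wordPoly (true :: (List.replicate (m + 2 * n) false ++
          true :: (List.replicate (m + n) false ++
            true :: (List.replicate m false ++ [true]))))) ∧
    Irreducible
      (1 + X 0 ^ 2 * (X 1 ^ (2 * m + 4 * n) - X 1 ^ (2 * m + 2 * n)) +
        X 0 ^ 4 * X 1 ^ (4 * m + 4 * n) : MvPolynomial (Fin 2) R) := by
  refine ⟨wordPoly_factorization m n, dvd_aeval_sq_wordPoly m n, ?_⟩
  have h := irreducible_mvPolynomial_quartic h6 (m + n) (d := 2 * n) (by lia)
  rwa [show 2 * (m + n) + 2 * n = 2 * m + 4 * n by ring, mul_add, mul_add] at h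

/-- For `m ≥ 0`, `n ≥ 1` and `w = X A^{m+2n} X A^{m+n} X A^m X`:
`P_w(x,y) = (1 + x y^{m+n})(1 + x(y^{m+2n} - y^{m+n}) + x² y^{2m+2n})`, the polynomial
`1 + x²(y^{2m+4n} - y^{2m+2n}) + x⁴ y^{4m+4n}` is a factor of `P_w(x², y²)` in `ℤ[x,y]`,
and that polynomial is irreducible in `ℂ[x,y]`. -/
theorem stmt5 (m n : ℕ) (hn : 1 ≤ n) :
    wordPoly (true :: (List.replicate (m + 2 * n) false ++
        true :: (List.replicate (m + n) false ++
          true :: (List.replicate m false ++ [true])))) =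
      (1 + X 0 * X 1 ^ (m + n)) *
        (1 + X 0 * (X 1 ^ (m + 2 * n) - X 1 ^ (m + n)) + X 0 ^ 2 * X 1 ^ (2 * m + 2 * n)) ∧
    (1 + X 0 ^ 2 * (X 1 ^ (2 * m + 4 * n) - X 1 ^ (2 * m + 2 * n)) +
        X 0 ^ 4 * X 1 ^ (4 * m + 4 * n) : MvPolynomial (Fin 2) ℤ) ∣
      aeval ![(X 0 : MvPolynomial (Fin 2) ℤ) ^ 2, X 1 ^ 2]
        (wordPoly (true :: (List.replicate (m + 2 * n) false ++
          true :: (List.replicate (m + n) false ++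
            true :: (List.replicate m false ++ [true]))))) ∧
    Irreducible
      (1 + X 0 ^ 2 * (X 1 ^ (2 * m + 4 * n) - X 1 ^ (2 * m + 2 * n)) +
        X 0 ^ 4 * X 1 ^ (4 * m + 4 * n) : MvPolynomial (Fin 2) ℂ) :=
  stmt5_general (by norm_num) m n hn
end

section
/- Let u and w be finite words in the alphabet {X,A}, each ending in the letter X, and let m and n be respectively the number of letters of w equal to A and to X. Let u o w denote the word obtained by replacing each occurrence of the letter X in u by the word w. Then P_{u o w}(x,y) = P_u(x^n y^m, y) * P_w(x,y) in Z[x,y]. -/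
open MvPolynomial

/-!
The polynomial of a concatenation obeys the cocycle rule `P_{vw} = P_v + M_v P_w`, where `M_v` is
the monomial `x^n y^m` recording the letter counts of `v`. Prefixing `A` to `u` multiplies both
`P_u` and `P_{u ∘ w}` by `y`, while prefixing `X` applies `p ↦ M_w p + 1` to `P_u(M_w, y)` and
`p ↦ M_w p + P_w` to `P_{u ∘ w}`. Hence both sides satisfy the same recursion in `u`.
-/

/-- The monomial `x^n y^m` of a word with `n` letters `X` and `m` letters `A`: the factor by which
the word scales the polynomial of whatever follows it in a concatenation. -/
noncomputable def wordMonomial (w : List Bool) : MvPolynomial (Fin 2) ℤ :=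
  X 0 ^ w.count true * X 1 ^ w.count false

theorem wordMonomial_nil : wordMonomial [] = 1 := by
  simp [wordMonomial]

theorem wordMonomial_cons_true (w : List Bool) :
    wordMonomial (true :: w) = X 0 * wordMonomial w := by
  simp [wordMonomial, pow_succ', mul_assoc]

theorem wordMonomial_cons_false (w : List Bool) :
    wordMonomial (false :: w) = X 1 * wordMonomial w := by
  simp [wordMonomial, pow_succ', mul_left_comm]

theorem wordPoly_append (v w : List Bool) :
    wordPoly (v ++ w) = wordPoly v + wordMonomial v * wordPoly w := by
  induction v with
  | nil => simp [wordPoly, wordMonomial_nil]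
  | cons c v ih =>
    cases c with
    | false => rw [List.cons_append, wordPoly, wordPoly, ih, wordMonomial_cons_false]; ring
    | true => rw [List.cons_append, wordPoly, wordPoly, ih, wordMonomial_cons_true]; ring

section aeval

variable {R : Type*} [CommSemiring R] [Algebra ℤ R] (a b : R) (u : List Bool)

theorem aeval_wordPoly_cons_true :
    aeval ![a, b] (wordPoly (true :: u)) = a * aeval ![a, b] (wordPoly u) + 1 := by
  simp [wordPoly]

theorem aeval_wordPoly_cons_false :
    aeval ![a, b] (wordPoly (false :: u)) = b * aeval ![a, b] (wordPoly u) := by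
  simp [wordPoly]

end aeval

theorem stmt12_general (u w : List Bool) :
    wordPoly (u.flatMap fun c => if c then w else [false]) =
      aeval ![(X 0 : MvPolynomial (Fin 2) ℤ) ^ (w.count true) * X 1 ^ (w.count false), X 1]
        (wordPoly u) * wordPoly w := by
  rw [← wordMonomial]
  induction u with
  | nil => simp [wordPoly]
  | cons c u ih =>
    rw [List.flatMap_cons]
    cases c with
    | false =>
      rw [if_neg Bool.false_ne_true, List.singleton_append, wordPoly, ih,
        aeval_wordPoly_cons_false, mul_assoc]
    | true =>
      rw [if_pos rfl, wordPoly_append, ih, aeval_wordPoly_cons_true]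
      ring

/-- If `u` and `w` are words ending in `X`, `m` (resp. `n`) is the number of letters of
`w` equal to `A` (resp. `X`), and `u ∘ w` is the word obtained by replacing each
occurrence of `X` in `u` by `w`, then `P_{u ∘ w}(x,y) = P_u(xⁿyᵐ, y) ⬝ P_w(x,y)`. -/
theorem stmt12 (u w : List Bool) (hu : u.getLast? = some true)
    (hw : w.getLast? = some true) :
    wordPoly (u.flatMap fun c => if c then w else [false]) =
      aeval ![(X 0 : MvPolynomial (Fin 2) ℤ) ^ (w.count true) * X 1 ^ (w.count false), X 1]
        (wordPoly u) * wordPoly w :=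
  stmt12_general u w
end
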